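/- Let A > 13 and δ > 0 be fixed and let h ∈ 𝓗(A,δ). Then the function H⁺ is twice differentiable on the interval (0,4π), and there exists a constant C = C(A,h) such that |(H⁺)′(x)| ≤ C and |(H⁺)″(x)| ≤ C for all x ∈ (0,4π). -/

import Mathlib

open MeasureTheory Real Complex

/-- The Bessel function of the first kind `J_ν(x)`, for `x > 0`, defined via its power series,
where `(x/2)^w := exp (w * log (x/2))` with the real logarithm. -/
noncomputable def besselJ (ν : ℂ) (x : ℝ) : ℂ :=
  ∑' m : ℕ, ((-1) ^ m / ((Nat.factorial m : ℂ) * Complex.Gamma (m + ν + 1))) *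
    Complex.exp ((2 * m + ν) * Real.log (x / 2))

/-- The integral transform `H⁺(x) = (2i/π) ∫_ℝ h(t) J_{2it}(x) t / cosh(πt) dt`. -/
noncomputable def Hplus (h : ℝ → ℝ) (x : ℝ) : ℂ :=
  (2 * Complex.I / (π : ℂ)) *
    ∫ t : ℝ, (h t : ℂ) * besselJ (2 * Complex.I * t) x * ((t : ℂ) / (Real.cosh (π * t) : ℂ))

/-- `h : ℝ → ℝ` belongs to the class `𝓗(A, δ)`, witnessed by the holomorphic extension
`H : ℂ → ℂ` to the strip `{s : |Im s| ≤ A}`. -/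
structure IsInHClass (A δ : ℝ) (h : ℝ → ℝ) (H : ℂ → ℂ) : Prop where
  nonneg : ∀ t : ℝ, 0 ≤ h t
  even : ∀ t : ℝ, h (-t) = h t
  not_zero : ∃ t : ℝ, h t ≠ 0
  extends_h : ∀ t : ℝ, H (t : ℂ) = (h t : ℂ)
  even_ext : ∀ s : ℂ, H (-s) = H s
  holo : DifferentiableOn ℂ H {s : ℂ | |s.im| ≤ A}
  bound : ∃ C : ℝ, ∀ s : ℂ, |s.im| ≤ A → ‖H s‖ ≤ C * (1 + ‖s‖) ^ (-(2 + δ))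

/-!
`1 / cosh (π s)` has a single pole in the strip `-1 ≤ Im s ≤ 0`, at `s = -i/2`, and changes sign
under `s ↦ s - i`. Moving the contour of `H⁺` from `Im s = 0` to `Im s = -1` therefore turns the
orders `2it` into `2 + 2it` at the cost of a residue, a multiple of `J₁(x)`. Two applications of
`J_ν' = (J_{ν-1} - J_{ν+1}) / 2` now stay in the half-plane `Re ν ≥ 0` (apart from `J₋₁ = -J₁`),
where `|J_ν(x)| ≪ cosh (π Im ν / 2)` uniformly for `0 < x ≤ R` and bounded `Re ν`. This growth is
cancelled by `cosh (πt)`, so the differentiated integrals are dominated by `∫ |h(t - i)(t - i)| dt`.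
-/

open Filter Topology

section Gamma

lemma sinh_div_self_le_cosh (x : ℝ) : Real.sinh x / x ≤ Real.cosh x := by
  have deriv_eq (t : ℝ) :
      HasDerivAt (fun t ↦ t * Real.cosh t - Real.sinh t) (t * Real.sinh t) t :=
    (((hasDerivAt_id t).mul (Real.hasDerivAt_cosh t)).sub
      (Real.hasDerivAt_sinh t)).congr_deriv (by simp)
  have mono : Monotone fun t ↦ t * Real.cosh t - Real.sinh t :=
    monotone_of_hasDerivAt_nonneg deriv_eq fun t ↦ by
      rcases le_total 0 t with ht | ht
      · exact mul_nonneg ht (Real.sinh_nonneg_iff.2 ht)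
      · exact mul_nonneg_of_nonpos_of_nonpos ht (Real.sinh_nonpos_iff.2 ht)
  rcases lt_trichotomy x 0 with hx | rfl | hx
  · have := mono hx.le
    rw [div_le_iff_of_neg hx]
    simp only [Real.sinh_zero, zero_mul, sub_zero] at this
    linarith
  · simp
  · have := mono hx.le
    rw [div_le_iff₀ hx]
    simp only [Real.sinh_zero, zero_mul, sub_zero] at this
    linarith

lemma norm_inv_Gamma_one_add_mul_I_sq {y : ℝ} (hy : y ≠ 0) :
    ‖(Complex.Gamma (1 + y * I))⁻¹‖ ^ 2 = Real.sinh (π * y) / (π * y) := by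
  have hyI : (y * I : ℂ) ≠ 0 := by simp [hy]
  have conj_eq : starRingEnd ℂ (Complex.Gamma (1 + y * I)) = Complex.Gamma (1 - y * I) := by
    rw [← Complex.Gamma_conj]
    simp [sub_eq_add_neg]
  have reflection : Complex.Gamma (1 + y * I) * Complex.Gamma (1 - y * I) =
      ((π * y / Real.sinh (π * y) : ℝ) : ℂ) := by
    rw [add_comm, Complex.Gamma_add_one _ hyI, mul_assoc, Complex.Gamma_mul_Gamma_one_sub,
      ← mul_assoc, Complex.sin_mul_I, mul_div_assoc', mul_right_comm,
      mul_div_mul_right _ _ I_ne_zero, mul_comm (y : ℂ)]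
    push_cast
    rfl
  rw [norm_inv, inv_pow, ← inv_div, inv_inj, ← ofReal_inj, ← reflection, ← conj_eq, mul_conj,
    normSq_eq_norm_sq]

lemma norm_inv_Gamma_one_add_mul_I_le (y : ℝ) :
    ‖(Complex.Gamma (1 + y * I))⁻¹‖ ≤ Real.cosh (π * y / 2) := by
  rcases eq_or_ne y 0 with rfl | hy
  · simp
  refine le_of_sq_le_sq ?_ (Real.cosh_pos _).le
  calc ‖(Complex.Gamma (1 + y * I))⁻¹‖ ^ 2
      = Real.sinh (2 * (π * y / 2)) / (2 * (π * y / 2)) := by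
        rw [norm_inv_Gamma_one_add_mul_I_sq hy, mul_div_cancel₀ _ two_ne_zero]
    _ = Real.sinh (π * y / 2) / (π * y / 2) * Real.cosh (π * y / 2) := by
        rw [Real.sinh_two_mul]
        ring
    _ ≤ Real.cosh (π * y / 2) ^ 2 := by
        rw [sq]
        gcongr
        exact sinh_div_self_le_cosh _

lemma norm_betaIntegral_le {u v : ℂ} (hu : 0 < u.re) (hv : 0 < v.re) :
    ‖betaIntegral u v‖ ≤ ProbabilityTheory.beta u.re v.re := by
  have norm_eq (a b : ℂ) (x : ℝ) (hx : x ∈ Set.Ioo 0 1) :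
      ‖(x : ℂ) ^ (a - 1) * (1 - (x : ℂ)) ^ (b - 1)‖ = x ^ (a.re - 1) * (1 - x) ^ (b.re - 1) := by
    rw [norm_mul, norm_cpow_eq_rpow_re_of_pos hx.1, ← ofReal_one, ← ofReal_sub,
      norm_cpow_eq_rpow_re_of_pos (sub_pos.2 hx.2)]
    simp
  have beta_eq : betaIntegral u.re v.re =
      ((∫ x in (0 : ℝ)..1, x ^ (u.re - 1) * (1 - x) ^ (v.re - 1) : ℝ) : ℂ) := by
    rw [betaIntegral, ← intervalIntegral.integral_ofReal]
    refine intervalIntegral.integral_congr_Ioo_of_le zero_le_one fun x hx ↦ ?_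
    simp [ofReal_cpow hx.1.le, ofReal_cpow (sub_pos.2 hx.2).le]
  rw [ProbabilityTheory.beta_eq_betaIntegralReal _ _ hu hv, beta_eq, ofReal_re,
    ← intervalIntegral.integral_congr_Ioo_of_le zero_le_one (norm_eq u v)]
  exact intervalIntegral.norm_integral_le_integral_norm zero_le_one

lemma norm_Gamma_mul_Gamma_re_add_le {s : ℂ} (hs : 0 < s.re) {r : ℝ} (hr : 0 ≤ r) :
    ‖Complex.Gamma s‖ * Real.Gamma (s.re + r) ≤ Real.Gamma s.re * ‖Complex.Gamma (s + r)‖ := by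
  rcases hr.eq_or_lt with rfl | hr
  · simp [mul_comm]
  have hΓr := Real.Gamma_pos_of_pos hr
  have beta_eq : ‖Complex.Gamma s‖ * Real.Gamma r =
      ‖Complex.Gamma (s + r)‖ * ‖betaIntegral s r‖ := by
    rw [← norm_mul, ← Gamma_mul_Gamma_eq_betaIntegral hs (by simpa), norm_mul, Gamma_ofReal,
      norm_real, Real.norm_of_nonneg hΓr.le]
  have beta_le := norm_betaIntegral_le hs (v := r) (by simpa)
  rw [ofReal_re, ProbabilityTheory.beta,
    le_div_iff₀ (Real.Gamma_pos_of_pos (by positivity))] at beta_le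
  refine le_of_mul_le_mul_right ?_ hΓr
  calc ‖Complex.Gamma s‖ * Real.Gamma (s.re + r) * Real.Gamma r
      = ‖Complex.Gamma (s + r)‖ * (‖betaIntegral s r‖ * Real.Gamma (s.re + r)) := by
        rw [mul_right_comm, beta_eq, mul_assoc]
    _ ≤ ‖Complex.Gamma (s + r)‖ * (Real.Gamma s.re * Real.Gamma r) := by gcongr
    _ = Real.Gamma s.re * ‖Complex.Gamma (s + r)‖ * Real.Gamma r := by ring

lemma half_le_Gamma {x : ℝ} (hx : 1 ≤ x) : 1 / 2 ≤ Real.Gamma x := by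
  have one_le {y : ℝ} (hy : 2 ≤ y) : 1 ≤ Real.Gamma y :=
    Real.Gamma_two.symm.trans_le (Real.Gamma_strictMonoOn_Ici.monotoneOn Set.self_mem_Ici hy hy)
  rcases le_total 2 x with h | h
  · linarith [one_le h]
  · have := one_le (show 2 ≤ x + 1 by linarith)
    rw [Real.Gamma_add_one (by positivity)] at this
    nlinarith

lemma norm_inv_Gamma_le {s : ℂ} (hs : 1 ≤ s.re) :
    ‖(Complex.Gamma s)⁻¹‖ ≤ 2 * Real.cosh (π * s.im / 2) := by
  have line := norm_inv_Gamma_one_add_mul_I_le s.im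
  have mono := norm_Gamma_mul_Gamma_re_add_le (s := 1 + s.im * I) (by simp) (sub_nonneg.2 hs)
  have s_eq : 1 + s.im * I + ((s.re - 1 : ℝ) : ℂ) = s := by apply Complex.ext <;> simp
  rw [s_eq] at mono
  simp only [add_re, one_re, mul_re, ofReal_re, I_re, mul_zero, ofReal_im, I_im, mul_one, sub_self,
    add_zero, Real.Gamma_one, one_mul, add_sub_cancel] at mono
  have line_pos : 0 < ‖Complex.Gamma (1 + s.im * I)‖ :=
    norm_pos_iff.2 (Gamma_ne_zero_of_re_pos (by simp))
  rw [norm_inv] at line ⊢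
  calc ‖Complex.Gamma s‖⁻¹ ≤ (‖Complex.Gamma (1 + s.im * I)‖ * (1 / 2))⁻¹ := by
        gcongr
        exact le_trans (by gcongr; exact half_le_Gamma hs) mono
    _ = 2 * ‖Complex.Gamma (1 + s.im * I)‖⁻¹ := by
        rw [mul_inv, one_div, inv_inv, mul_comm]
    _ ≤ 2 * Real.cosh (π * s.im / 2) := by gcongr

end Gamma

section BesselClifford

/-- The Bessel–Clifford function: the entire function of `z` for which
`J_ν(x) = (x / 2) ^ ν * besselClifford ν (-(x / 2) ^ 2)`. -/
noncomputable def besselClifford (ν z : ℂ) : ℂ :=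
  ∑' m : ℕ, z ^ m / m.factorial * (Complex.Gamma (m + ν + 1))⁻¹

variable {ν : ℂ}

lemma norm_besselClifford_term_le (hν : 0 ≤ ν.re) (z : ℂ) (m : ℕ) :
    ‖z ^ m / m.factorial * (Complex.Gamma (m + ν + 1))⁻¹‖ ≤
      2 * Real.cosh (π * ν.im / 2) * (‖z‖ ^ m / m.factorial) := by
  have re_le : 1 ≤ (m + ν + 1).re := by
    simp only [add_re, natCast_re, one_re]
    linarith [m.cast_nonneg (α := ℝ)]
  rw [norm_mul, mul_comm, norm_div, norm_pow, Complex.norm_natCast]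
  gcongr
  simpa using norm_inv_Gamma_le re_le

lemma hasSum_besselClifford (hν : 0 ≤ ν.re) (z : ℂ) :
    HasSum (fun m : ℕ ↦ z ^ m / m.factorial * (Complex.Gamma (m + ν + 1))⁻¹)
      (besselClifford ν z) :=
  (Summable.of_norm_bounded ((Real.summable_pow_div_factorial ‖z‖).mul_left _)
    (norm_besselClifford_term_le hν z)).hasSum

lemma norm_besselClifford_le (hν : 0 ≤ ν.re) (z : ℂ) :
    ‖besselClifford ν z‖ ≤ 2 * Real.cosh (π * ν.im / 2) * Real.exp ‖z‖ := by
  rw [Real.exp_eq_exp_ℝ]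
  exact tsum_of_norm_bounded ((NormedSpace.expSeries_div_hasSum_exp ‖z‖).mul_left _)
    (norm_besselClifford_term_le hν z)

lemma hasSum_natCast_mul_besselClifford (hν : 0 ≤ ν.re) (z : ℂ) :
    HasSum (fun m : ℕ ↦ m * z ^ (m - 1) / m.factorial * (Complex.Gamma (m + ν + 1))⁻¹)
      (besselClifford (ν + 1) z) := by
  have term_eq (m : ℕ) : ((m + 1 : ℕ) : ℂ) * z ^ (m + 1 - 1) / (m + 1).factorial *
      (Complex.Gamma ((m + 1 : ℕ) + ν + 1))⁻¹ =
        z ^ m / m.factorial * (Complex.Gamma (m + (ν + 1) + 1))⁻¹ := by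
    rw [Nat.factorial_succ, Nat.add_sub_cancel, Nat.cast_mul,
      mul_div_mul_left _ _ (Nat.cast_ne_zero.2 m.succ_ne_zero), Nat.cast_succ, add_right_comm _ 1,
      ← add_assoc]
  rw [← hasSum_nat_add_iff' 1]
  simp only [term_eq, Finset.sum_range_one, Nat.cast_zero, zero_mul, zero_div, sub_zero]
  exact hasSum_besselClifford (by simpa using by linarith) z

lemma hasDerivAt_besselClifford (hν : 0 ≤ ν.re) (z : ℂ) :
    HasDerivAt (besselClifford ν) (besselClifford (ν + 1) z) z := by
  set U := Metric.ball (0 : ℂ) (‖z‖ + 1)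
  have mem_U : z ∈ U := by simp [U]
  have summable := (Real.summable_pow_div_factorial (‖z‖ + 1)).mul_left
    (2 * Real.cosh (π * ν.im / 2))
  have term_le (m : ℕ) (w : ℂ) (hw : w ∈ U) :
      ‖w ^ m / m.factorial * (Complex.Gamma (m + ν + 1))⁻¹‖ ≤
        2 * Real.cosh (π * ν.im / 2) * ((‖z‖ + 1) ^ m / m.factorial) := by
    refine (norm_besselClifford_term_le hν w m).trans ?_
    gcongr
    exact (mem_ball_zero_iff.1 hw).le
  have term_diff (m : ℕ) : DifferentiableOn ℂ
      (fun w ↦ w ^ m / m.factorial * (Complex.Gamma (m + ν + 1))⁻¹) U := by fun_prop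
  have deriv_sum :=
    hasSum_deriv_of_summable_norm summable term_diff Metric.isOpen_ball term_le mem_U
  simp only [deriv_mul_const_field, deriv_div_const, deriv_pow_field] at deriv_sum
  rw [← deriv_sum.unique (hasSum_natCast_mul_besselClifford hν z)]
  exact ((differentiableOn_tsum_of_summable_norm summable term_diff Metric.isOpen_ball
    term_le).differentiableAt (Metric.isOpen_ball.mem_nhds mem_U)).hasDerivAt

lemma besselClifford_sub_one (hν : 0 ≤ ν.re) (z : ℂ) :
    besselClifford (ν - 1) z = ν * besselClifford ν z + z * besselClifford (ν + 1) z := by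
  have sum := ((hasSum_besselClifford hν z).mul_left ν).add
    ((hasSum_natCast_mul_besselClifford hν z).mul_left z)
  rw [← sum.tsum_eq, besselClifford]
  congr 1
  ext m
  have mul_pow : z * (m * z ^ (m - 1)) = m * z ^ m := by
    cases m with
    | zero => simp
    | succ m => rw [Nat.add_sub_cancel, pow_succ]; ring
  rw [show (m + (ν - 1) + 1 : ℂ) = m + ν by ring,
    one_div_Gamma_eq_self_mul_one_div_Gamma_add_one, ← mul_assoc z, ← mul_div_assoc z, mul_pow]
  ring

lemma differentiableAt_besselClifford_index (hν : -1 < ν.re) (z : ℂ) :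
    DifferentiableAt ℂ (fun μ ↦ besselClifford μ z) ν := by
  have of_pos {ν : ℂ} (hν : 0 < ν.re) : DifferentiableAt ℂ (fun μ ↦ besselClifford μ z) ν := by
    set U := {μ : ℂ | 0 < μ.re ∧ |μ.im| < |ν.im| + 1}
    have open_U : IsOpen U := (isOpen_lt continuous_const continuous_re).inter
      (isOpen_lt continuous_im.abs continuous_const)
    have summable := (Real.summable_pow_div_factorial ‖z‖).mul_left
      (2 * Real.cosh (π * (|ν.im| + 1) / 2))
    refine (differentiableOn_tsum_of_summable_norm summable (fun m ↦ ?_) open_U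
      fun m μ hμ ↦ ?_).differentiableAt (open_U.mem_nhds ⟨hν, by linarith⟩)
    · exact ((differentiable_one_div_Gamma.comp (by fun_prop)).const_mul _).differentiableOn
    · refine (norm_besselClifford_term_le hμ.1.le z m).trans ?_
      refine mul_le_mul_of_nonneg_right (mul_le_mul_of_nonneg_left ?_ two_pos.le) (by positivity)
      rw [Real.cosh_le_cosh, abs_div, abs_div, abs_mul, abs_mul]
      gcongr |π| * ?_ / |2|
      exact hμ.2.le.trans (le_abs_self _)
  -- The recurrence continues differentiability from `Re ν > 0` to `Re ν > -1`.
  have recurrence : ∀ᶠ μ in 𝓝 ν, besselClifford μ z =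
      (μ + 1) * besselClifford (μ + 1) z + z * besselClifford (μ + 1 + 1) z := by
    filter_upwards [(isOpen_lt continuous_const continuous_re).mem_nhds hν] with μ (hμ : -1 < μ.re)
    rw [← besselClifford_sub_one (by simpa using by linarith), add_sub_cancel_right]
  refine DifferentiableAt.congr_of_eventuallyEq ?_ recurrence
  have diff_one : DifferentiableAt ℂ (fun μ ↦ besselClifford (μ + 1) z) ν :=
    differentiableAt_comp_add_const.2 (of_pos (by simpa using by linarith))
  have diff_two : DifferentiableAt ℂ (fun μ ↦ besselClifford (μ + 1 + 1) z) ν :=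
    differentiableAt_comp_add_const.2 (differentiableAt_comp_add_const.2
      (of_pos (by simpa using by linarith)))
  fun_prop

end BesselClifford

section BesselJ

variable {ν : ℂ} {x : ℝ}

lemma besselJ_eq_cpow_mul (ν : ℂ) (hx : 0 < x) :
    besselJ ν x = ((x / 2 : ℝ) : ℂ) ^ ν * besselClifford ν (-((x / 2 : ℝ) : ℂ) ^ 2) := by
  have hx2 : ((x / 2 : ℝ) : ℂ) ≠ 0 := ofReal_ne_zero.2 (by positivity)
  rw [besselJ, besselClifford, ← tsum_mul_left]
  congr 1
  ext m
  have pow_eq : (-((x / 2 : ℝ) : ℂ) ^ 2) ^ m = (-1) ^ m * ((x / 2 : ℝ) : ℂ) ^ (2 * m : ℂ) := by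
    rw [neg_pow, ← pow_mul]
    norm_cast
  rw [ofReal_log (by positivity), mul_comm _ (Complex.log _), ← cpow_def_of_ne_zero hx2,
    cpow_add _ _ hx2, pow_eq, div_eq_mul_inv, mul_inv]
  ring

lemma norm_besselJ_le (hν : 0 ≤ ν.re) (hx : 0 < x) :
    ‖besselJ ν x‖ ≤
      (x / 2) ^ ν.re * (2 * Real.cosh (π * ν.im / 2) * Real.exp ((x / 2) ^ 2)) := by
  rw [besselJ_eq_cpow_mul ν hx, norm_mul, norm_cpow_eq_rpow_re_of_pos (by positivity)]
  gcongr
  have norm_arg : ‖-((x / 2 : ℝ) : ℂ) ^ 2‖ = (x / 2) ^ 2 := by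
    rw [norm_neg, norm_pow, norm_real, Real.norm_of_nonneg (by positivity)]
  rw [← norm_arg]
  exact norm_besselClifford_le hν _

lemma exists_norm_besselJ_le (N R : ℝ) :
    ∃ M : ℝ, ∀ (ν : ℂ) (x : ℝ), 0 ≤ ν.re → ν.re ≤ N → 0 < x → x ≤ R →
      ‖besselJ ν x‖ ≤ M * Real.cosh (π * ν.im / 2) := by
  refine ⟨(1 + |R| / 2) ^ N * 2 * Real.exp ((R / 2) ^ 2), fun ν x hν hνN hx hxR ↦ ?_⟩
  have rpow_le : (x / 2) ^ ν.re ≤ (1 + |R| / 2) ^ N := calc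
    (x / 2) ^ ν.re ≤ (1 + |R| / 2) ^ ν.re := by
      gcongr
      linarith [le_abs_self R]
    _ ≤ (1 + |R| / 2) ^ N := by
      gcongr
      linarith [abs_nonneg R]
  calc ‖besselJ ν x‖
      ≤ (x / 2) ^ ν.re * (2 * Real.cosh (π * ν.im / 2) * Real.exp ((x / 2) ^ 2)) :=
        norm_besselJ_le hν hx
    _ ≤ (1 + |R| / 2) ^ N * (2 * Real.cosh (π * ν.im / 2) * Real.exp ((R / 2) ^ 2)) := by gcongr
    _ = (1 + |R| / 2) ^ N * 2 * Real.exp ((R / 2) ^ 2) * Real.cosh (π * ν.im / 2) := by ring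

lemma besselJ_sub_one_add_besselJ_add_one (hν : 0 ≤ ν.re) (hx : 0 < x) :
    besselJ (ν - 1) x + besselJ (ν + 1) x = 2 * ν / x * besselJ ν x := by
  have hx0 : (x : ℂ) ≠ 0 := ofReal_ne_zero.2 hx.ne'
  have hx2 : ((x / 2 : ℝ) : ℂ) ≠ 0 := ofReal_ne_zero.2 (by positivity)
  simp only [besselJ_eq_cpow_mul _ hx, besselClifford_sub_one hν, cpow_sub _ _ hx2,
    cpow_add _ _ hx2, cpow_one]
  push_cast
  field_simp
  ring

lemma besselJ_neg_one (hx : 0 < x) : besselJ (-1) x = -besselJ 1 x := by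
  have recurrence := besselJ_sub_one_add_besselJ_add_one (ν := 0) le_rfl hx
  rw [zero_sub, zero_add, mul_zero, zero_div, zero_mul] at recurrence
  exact eq_neg_of_add_eq_zero_left recurrence

lemma hasDerivAt_besselJ (hν : 0 ≤ ν.re) (hx : 0 < x) :
    HasDerivAt (besselJ ν) ((besselJ (ν - 1) x - besselJ (ν + 1) x) / 2) x := by
  have hx2 : ((x / 2 : ℝ) : ℂ) ≠ 0 := ofReal_ne_zero.2 (by positivity)
  have half : HasDerivAt (fun y : ℝ ↦ ((y / 2 : ℝ) : ℂ)) (1 / 2) x := by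
    simpa using ((hasDerivAt_id x).div_const 2).ofReal_comp
  have clifford := (hasDerivAt_besselClifford hν (-((x / 2 : ℝ) : ℂ) ^ 2)).comp x (half.pow 2).neg
  have power := (Complex.hasStrictDerivAt_cpow_const (c := ν)
    (ofReal_mem_slitPlane.2 (half_pos hx))).hasDerivAt.comp x half
  have factored : besselJ ν =ᶠ[𝓝 x] fun y ↦
      ((y / 2 : ℝ) : ℂ) ^ ν * besselClifford ν (-((y / 2 : ℝ) : ℂ) ^ 2) := by
    filter_upwards [lt_mem_nhds hx] with y hy using besselJ_eq_cpow_mul ν hy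
  have prev : besselJ (ν - 1) x = 2 * ν / x * besselJ ν x - besselJ (ν + 1) x :=
    eq_sub_of_add_eq (besselJ_sub_one_add_besselJ_add_one hν hx)
  refine ((power.mul clifford).congr_of_eventuallyEq factored).congr_deriv ?_
  have hx0 : (x : ℂ) ≠ 0 := ofReal_ne_zero.2 hx.ne'
  rw [prev, besselJ_eq_cpow_mul _ hx, besselJ_eq_cpow_mul _ hx, cpow_sub _ _ hx2,
    cpow_add _ _ hx2, cpow_one]
  simp only [Function.comp_apply, Pi.neg_apply, Pi.pow_apply]
  push_cast
  field_simp
  ring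

lemma differentiableAt_besselJ_index (hν : -1 < ν.re) (hx : 0 < x) :
    DifferentiableAt ℂ (fun μ ↦ besselJ μ x) ν := by
  have hx2 : ((x / 2 : ℝ) : ℂ) ≠ 0 := ofReal_ne_zero.2 (by positivity)
  simp only [besselJ_eq_cpow_mul _ hx]
  exact (differentiableAt_id.const_cpow (.inl hx2)).mul (differentiableAt_besselClifford_index hν _)

end BesselJ

section Contour

variable {E : Type*} [NormedAddCommGroup E] [NormedSpace ℂ E] {f : ℂ → E} {a b : ℝ}

lemma tendsto_integral_vertical_segment (hab : a < b)
    (lim : Tendsto f (comap re (cocompact ℝ) ⊓ 𝓟 (im ⁻¹' Set.Icc a b)) (𝓝 0)) :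
    Tendsto (fun T : ℝ ↦ ∫ y : ℝ in a..b, f (T + y * I)) (cocompact ℝ) (𝓝 0) := by
  rw [NormedAddGroup.tendsto_nhds_zero] at lim ⊢
  intro ε hε
  have small := lim (ε / 2 / (b - a)) (div_pos (half_pos hε) (sub_pos.2 hab))
  rw [eventually_inf_principal, eventually_comap] at small
  filter_upwards [small] with T hT
  calc ‖∫ y : ℝ in a..b, f (T + y * I)‖ ≤ ε / 2 / (b - a) * |b - a| := by
        refine intervalIntegral.norm_integral_le_of_norm_le_const fun y hy ↦ ?_
        rw [Set.uIoc_of_le hab.le] at hy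
        exact (hT _ (by simp) (by simpa using ⟨hy.1.le, hy.2⟩)).le
    _ = ε / 2 := by
        rw [abs_of_pos (sub_pos.2 hab), div_mul_cancel₀ _ (sub_pos.2 hab).ne']
    _ < ε := half_lt_self hε

lemma continuousOn_closed_strip (hab : a ≠ b) (hf : DiffContOnCl ℂ f (im ⁻¹' Set.Ioo a b)) :
    ContinuousOn f (im ⁻¹' Set.Icc a b) := by
  simpa only [closure_preimage_im, closure_Ioo hab] using hf.continuousOn

lemma integral_horizontal_line_eq (hab : a < b) (hf : DiffContOnCl ℂ f (im ⁻¹' Set.Ioo a b))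
    (lim : Tendsto f (comap re (cocompact ℝ) ⊓ 𝓟 (im ⁻¹' Set.Icc a b)) (𝓝 0))
    (ha : Integrable fun x : ℝ ↦ f (x + a * I)) (hb : Integrable fun x : ℝ ↦ f (x + b * I)) :
    ∫ x : ℝ, f (x + a * I) = ∫ x : ℝ, f (x + b * I) := by
  have rect (T : ℝ) : (∫ x : ℝ in (-T)..T, f (x + a * I)) - (∫ x : ℝ in (-T)..T, f (x + b * I)) +
      I • (∫ y : ℝ in a..b, f (T + y * I)) -
        I • (∫ y : ℝ in a..b, f (((-T : ℝ) : ℂ) + y * I)) = 0 := by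
    refine integral_boundary_rect_eq_zero_of_continuousOn_of_differentiableOn f ⟨-T, a⟩ ⟨T, b⟩
      ((continuousOn_closed_strip hab.ne hf).mono fun s hs ↦ ?_)
      (hf.differentiableOn.mono fun s hs ↦ ?_)
    · simpa [Set.uIcc_of_le hab.le] using hs.2
    · simpa [hab.le] using hs.2
  have vertical := tendsto_integral_vertical_segment hab lim
  have limit := (((intervalIntegral_tendsto_integral ha tendsto_neg_atTop_atBot tendsto_id).sub
    (intervalIntegral_tendsto_integral hb tendsto_neg_atTop_atBot tendsto_id)).add
      ((vertical.comp (tendsto_id.mono_right atTop_le_cocompact)).const_smul I)).sub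
        ((vertical.comp (tendsto_neg_atTop_atBot.mono_right atBot_le_cocompact)).const_smul I)
  rw [smul_zero, add_zero, sub_zero] at limit
  exact sub_eq_zero.1 (tendsto_nhds_unique limit (tendsto_const_nhds.congr fun T ↦ (rect T).symm))

end Contour

section Cosh

lemma one_add_sq_le_cosh_pi_mul (t : ℝ) : 1 + t ^ 2 ≤ Real.cosh (π * t) := by
  have cosh_eq : Real.cosh (π * t) = 1 + 2 * Real.sinh (π * t / 2) ^ 2 := by
    rw [← mul_div_cancel₀ (π * t) two_ne_zero, mul_div_assoc, Real.cosh_two_mul, Real.cosh_sq]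
    ring_nf
  have sinh_ge : (π * t / 2) ^ 2 ≤ Real.sinh (π * t / 2) ^ 2 := by
    rw [sq_le_sq, Real.abs_sinh]
    exact Real.self_le_sinh_iff.2 (abs_nonneg _)
  have pi_sq : 9 ≤ π ^ 2 := by nlinarith [Real.pi_gt_three]
  nlinarith [mul_le_mul_of_nonneg_right pi_sq (sq_nonneg t)]

lemma tendsto_inv_cosh_pi_mul : Tendsto (fun t ↦ (Real.cosh (π * t))⁻¹) (cocompact ℝ) (𝓝 0) := by
  refine (tendsto_atTop_mono (fun t ↦ ?_) (tendsto_norm_cocompact_atTop (E := ℝ))).inv_tendsto_atTop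
  have := one_add_sq_le_cosh_pi_mul t
  rw [Real.norm_eq_abs]
  nlinarith [sq_abs t]

lemma integrable_inv_cosh_pi_mul : Integrable fun t : ℝ ↦ (Real.cosh (π * t))⁻¹ := by
  refine integrable_inv_one_add_sq.mono' ?_ (.of_forall fun t ↦ ?_)
  · exact (Continuous.inv₀ (by fun_prop) fun t ↦ (Real.cosh_pos _).ne').aestronglyMeasurable
  · rw [norm_inv, Real.norm_of_nonneg (Real.cosh_pos _).le]
    exact inv_anti₀ (by positivity) (one_add_sq_le_cosh_pi_mul t)

lemma integral_inv_cosh_pi_mul : ∫ t : ℝ, (Real.cosh (π * t))⁻¹ = 1 := by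
  have deriv_eq (t : ℝ) : HasDerivAt (fun t ↦ 2 / π * Real.arctan (Real.exp (π * t)))
      (Real.cosh (π * t))⁻¹ t := by
    refine ((((hasDerivAt_id t).const_mul π).exp.arctan).const_mul (2 / π)).congr_deriv ?_
    simp only [id, Real.cosh_eq, Real.exp_neg]
    field_simp
    ring
  have at_bot : Tendsto (fun t ↦ 2 / π * Real.arctan (Real.exp (π * t))) atBot (𝓝 0) := by
    have exp_lim := Real.tendsto_exp_atBot.comp (tendsto_id.const_mul_atBot Real.pi_pos)
    simpa using ((Real.continuous_arctan.tendsto 0).comp exp_lim).const_mul (2 / π)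
  have at_top : Tendsto (fun t ↦ 2 / π * Real.arctan (Real.exp (π * t))) atTop (𝓝 1) := by
    have exp_lim := Real.tendsto_exp_atTop.comp (tendsto_id.const_mul_atTop Real.pi_pos)
    have := ((Real.tendsto_arctan_atTop.mono_right nhdsWithin_le_nhds).comp exp_lim).const_mul
      (2 / π)
    rwa [div_mul_div_cancel₀ Real.pi_ne_zero, div_self two_ne_zero] at this
  rw [integral_of_hasDerivAt_of_tendsto deriv_eq integrable_inv_cosh_pi_mul at_bot at_top, sub_zero]

lemma abs_sinh_re_le_norm_cosh (s : ℂ) : |Real.sinh s.re| ≤ ‖Complex.cosh s‖ := by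
  refine abs_le_of_sq_le_sq ?_ (norm_nonneg _)
  have cosh_eq : Complex.cosh s = ((Real.cosh s.re * Real.cos s.im : ℝ) : ℂ) +
      ((Real.sinh s.re * Real.sin s.im : ℝ) : ℂ) * I := by
    rw [← re_add_im s, Complex.cosh_add, Complex.cosh_mul_I, Complex.sinh_mul_I]
    simp [mul_assoc]
  rw [cosh_eq, ← normSq_eq_norm_sq, normSq_add_mul_I]
  nlinarith [Real.cosh_sq s.re, Real.sin_sq_add_cos_sq s.im, sq_nonneg (Real.cos s.im)]

lemma cosh_le_two_mul_abs_sinh {x : ℝ} (hx : 1 ≤ |x|) : Real.cosh x ≤ 2 * |Real.sinh x| := by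
  rw [Real.abs_sinh, ← Real.cosh_abs]
  have sinh_ge := Real.self_le_sinh_iff.2 (abs_nonneg x)
  have exp_le : Real.exp (-|x|) ≤ 1 := Real.exp_le_one_iff.2 (by linarith)
  linarith [Real.cosh_sub_sinh |x|]

lemma cosh_pi_mul_sub_I (s : ℂ) : Complex.cosh (π * (s - I)) = -Complex.cosh (π * s) := by
  simp [mul_sub, Complex.cosh_sub, Complex.cosh_mul_I, Complex.sinh_mul_I]

lemma cosh_pi_mul_neg_I_div_two : Complex.cosh (π * -(I / 2)) = 0 := by
  rw [show (π * -(I / 2) : ℂ) = -((π / 2) * I) by ring, Complex.cosh_neg, Complex.cosh_mul_I,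
    Complex.cos_pi_div_two]

lemma eq_neg_I_div_two_of_cosh_pi_mul_eq_zero {s : ℂ} (him : s.im ∈ Set.Ioo (-(3 / 2)) (1 / 2))
    (hs : Complex.cosh (π * s) = 0) : s = -(I / 2) := by
  rw [← Complex.cos_mul_I, Complex.cos_eq_zero_iff] at hs
  obtain ⟨k, hk⟩ := hs
  have s_eq : s = ((-((2 * k + 1) / 2) : ℝ) : ℂ) * I := by
    rw [mul_assoc, mul_comm ((2 * k + 1 : ℂ)), mul_div_assoc] at hk
    have := mul_left_cancel₀ (ofReal_ne_zero.2 Real.pi_ne_zero) hk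
    push_cast
    linear_combination s * I_sq - I * this
  rw [s_eq, im_ofReal_mul, I_im, mul_one] at him
  have k_lt : (k : ℝ) < 1 := by linarith [him.1]
  have lt_k : (-1 : ℝ) < k := by linarith [him.2]
  have k_eq : k = 0 := by
    have : k < 1 := by exact_mod_cast k_lt
    have : -1 < k := by exact_mod_cast lt_k
    lia
  rw [s_eq, k_eq]
  push_cast
  ring

end Cosh

section ResidueFormula

/-- The quotient `(K s - K (-i / 2)) / cosh (π s)`, extended by its limit at the zero `-i / 2` of
the denominator so that it is holomorphic wherever `K` is in the strip `-3 / 2 < Im s < 1 / 2`. -/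
noncomputable def coshQuotient (K : ℂ → ℂ) (s : ℂ) : ℂ :=
  dslope K (-(I / 2)) s / dslope (fun s ↦ Complex.cosh (π * s)) (-(I / 2)) s

variable {K : ℂ → ℂ} {s : ℂ}

lemma coshQuotient_of_ne (hs : s ≠ -(I / 2)) :
    coshQuotient K s = (K s - K (-(I / 2))) / Complex.cosh (π * s) := by
  rw [coshQuotient, dslope_of_ne _ hs, dslope_of_ne _ hs, slope_def_module, slope_def_module,
    cosh_pi_mul_neg_I_div_two, sub_zero, smul_eq_mul, smul_eq_mul,
    mul_div_mul_left _ _ (inv_ne_zero (sub_ne_zero.2 hs))]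

lemma dslope_cosh_pi_mul_ne_zero (him : s.im ∈ Set.Ioo (-(3 / 2)) (1 / 2)) :
    dslope (fun s ↦ Complex.cosh (π * s)) (-(I / 2)) s ≠ 0 := by
  rcases eq_or_ne s (-(I / 2)) with rfl | hs
  · have deriv_eq : HasDerivAt (fun s ↦ Complex.cosh (π * s))
        (Complex.sinh (π * -(I / 2)) * (π * 1)) (-(I / 2)) :=
      ((hasDerivAt_id _).const_mul (π : ℂ)).ccosh
    rw [dslope_same, deriv_eq.deriv, show (π * -(I / 2) : ℂ) = -((π / 2) * I) by ring,
      Complex.sinh_neg, Complex.sinh_mul_I, Complex.sin_pi_div_two]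
    simp
  · rw [dslope_of_ne _ hs, slope_def_module, cosh_pi_mul_neg_I_div_two, sub_zero]
    exact smul_ne_zero (inv_ne_zero (sub_ne_zero.2 hs))
      fun hzero ↦ hs (eq_neg_I_div_two_of_cosh_pi_mul_eq_zero him hzero)

lemma diffContOnCl_dslope {f : ℂ → ℂ} {U : Set ℂ} {c : ℂ} (hf : DiffContOnCl ℂ f U)
    (hU : U ∈ 𝓝 c) : DiffContOnCl ℂ (dslope f c) U where
  differentiableOn := (Complex.differentiableOn_dslope hU).2 hf.differentiableOn
  continuousOn := (continuousOn_dslope (mem_of_superset hU subset_closure)).2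
    ⟨hf.continuousOn, hf.differentiableOn.differentiableAt hU⟩

lemma diffContOnCl_coshQuotient (hK : DiffContOnCl ℂ K (im ⁻¹' Set.Ioo (-1) 0)) :
    DiffContOnCl ℂ (coshQuotient K) (im ⁻¹' Set.Ioo (-1) 0) := by
  have strip_nhds : im ⁻¹' Set.Ioo (-1) 0 ∈ 𝓝 (-(I / 2)) :=
    (isOpen_Ioo.preimage continuous_im).mem_nhds (by norm_num)
  have cosh_diff : Differentiable ℂ fun s : ℂ ↦ Complex.cosh (π * s) := by fun_prop
  have inv_diff : DiffContOnCl ℂ (dslope (fun s : ℂ ↦ Complex.cosh (π * s)) (-(I / 2)))⁻¹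
      (im ⁻¹' Set.Ioo (-1) 0) :=
    (diffContOnCl_dslope cosh_diff.diffContOnCl strip_nhds).inv fun s hs ↦ by
      rw [closure_preimage_im, closure_Ioo (by norm_num)] at hs
      exact dslope_cosh_pi_mul_ne_zero ⟨by linarith [hs.1], by linarith [hs.2]⟩
  simpa only [coshQuotient, div_eq_mul_inv] using!
    (diffContOnCl_dslope hK strip_nhds).smul inv_diff

lemma norm_coshQuotient_le (hs : 1 ≤ |s.re|) :
    ‖coshQuotient K s‖ ≤
      2 * ((‖K s‖ + ‖K (-(I / 2))‖) / Real.cosh (π * s.re)) := by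
  have hne : s ≠ -(I / 2) := by
    rintro rfl
    norm_num at hs
  have cosh_le : Real.cosh (π * s.re) ≤ 2 * ‖Complex.cosh (π * s)‖ := by
    have hre : (π * s : ℂ).re = π * s.re := re_ofReal_mul _ _
    have := abs_sinh_re_le_norm_cosh (π * s)
    rw [hre] at this
    refine (cosh_le_two_mul_abs_sinh ?_).trans (by gcongr)
    rw [abs_mul, abs_of_pos Real.pi_pos]
    nlinarith [Real.pi_gt_three]
  have cosh_pos := Real.cosh_pos (π * s.re)
  have norm_pos : 0 < ‖Complex.cosh (π * s)‖ := by linarith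
  rw [coshQuotient_of_ne hne, norm_div, ← mul_div_assoc, div_le_div_iff₀ norm_pos cosh_pos]
  calc ‖K s - K (-(I / 2))‖ * Real.cosh (π * s.re)
      ≤ (‖K s‖ + ‖K (-(I / 2))‖) * (2 * ‖Complex.cosh (π * s)‖) := by
        gcongr
        exact norm_sub_le _ _
    _ = 2 * (‖K s‖ + ‖K (-(I / 2))‖) * ‖Complex.cosh (π * s)‖ := by ring

variable {φ : ℝ → ℝ}

lemma tendsto_coshQuotient (hφ : Tendsto φ (cocompact ℝ) (𝓝 0))
    (hb : ∀ s : ℂ, s.im ∈ Set.Icc (-1) 0 → ‖K s‖ ≤ φ s.re * Real.cosh (π * s.re)) :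
    Tendsto (coshQuotient K) (comap re (cocompact ℝ) ⊓ 𝓟 (im ⁻¹' Set.Icc (-1) 0)) (𝓝 0) := by
  have bound_lim : Tendsto
      (fun s : ℂ ↦ 2 * (φ s.re + ‖K (-(I / 2))‖ * (Real.cosh (π * s.re))⁻¹))
      (comap re (cocompact ℝ)) (𝓝 0) := by
    have := (hφ.add (tendsto_inv_cosh_pi_mul.const_mul ‖K (-(I / 2))‖)).const_mul 2
    rw [mul_zero, add_zero, mul_zero] at this
    exact this.comp tendsto_comap
  have re_large : ∀ᶠ s : ℂ in comap re (cocompact ℝ), 1 ≤ |s.re| :=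
    ((tendsto_norm_cocompact_atTop (E := ℝ)).comp tendsto_comap).eventually_ge_atTop 1
  refine squeeze_zero_norm' ?_ (bound_lim.mono_left inf_le_left)
  filter_upwards [re_large.filter_mono inf_le_left, mem_inf_of_right (mem_principal_self _)]
    with s hre him
  refine (norm_coshQuotient_le hre).trans ?_
  rw [add_div, div_eq_mul_inv ‖K (-(I / 2))‖]
  gcongr
  exact (div_le_iff₀ (Real.cosh_pos _)).2 (hb s him)

lemma integrable_div_cosh_pi_mul {g : ℝ → ℂ} (hg : Continuous g) (hφ : Integrable φ)
    (hb : ∀ t, ‖g t‖ ≤ φ t * Real.cosh (π * t)) :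
    Integrable fun t : ℝ ↦ g t / (Real.cosh (π * t) : ℂ) := by
  refine hφ.mono' ?_ (.of_forall fun t ↦ ?_)
  · exact (hg.div (by fun_prop) fun t ↦
      ofReal_ne_zero.2 (Real.cosh_pos _).ne').aestronglyMeasurable
  · rw [norm_div, norm_real, Real.norm_of_nonneg (Real.cosh_pos _).le]
    exact (div_le_iff₀ (Real.cosh_pos _)).2 (hb t)

lemma integral_div_cosh_add_integral_sub_I (hK : DiffContOnCl ℂ K (im ⁻¹' Set.Ioo (-1) 0))
    (hφ : Tendsto φ (cocompact ℝ) (𝓝 0)) (hφi : Integrable φ)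
    (hb : ∀ s : ℂ, s.im ∈ Set.Icc (-1) 0 → ‖K s‖ ≤ φ s.re * Real.cosh (π * s.re)) :
    (∫ t : ℝ, K t / (Real.cosh (π * t) : ℂ)) + ∫ t : ℝ, K (t - I) / (Real.cosh (π * t) : ℂ) =
      2 * K (-(I / 2)) := by
  have cont := continuousOn_closed_strip (by norm_num) hK
  have int_top : Integrable fun t : ℝ ↦ K t / (Real.cosh (π * t) : ℂ) :=
    integrable_div_cosh_pi_mul (cont.comp_continuous (by fun_prop) (by simp)) hφi
      fun t ↦ by simpa using hb t (by simp)
  have int_bot : Integrable fun t : ℝ ↦ K (t - I) / (Real.cosh (π * t) : ℂ) :=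
    integrable_div_cosh_pi_mul (cont.comp_continuous (by fun_prop) (by simp)) hφi
      fun t ↦ by simpa using hb (t - I) (by simp)
  have int_const : Integrable fun t : ℝ ↦ K (-(I / 2)) * ((Real.cosh (π * t))⁻¹ : ℝ) :=
    integrable_inv_cosh_pi_mul.ofReal.const_mul _
  have top_eq (t : ℝ) : coshQuotient K (t + (0 : ℝ) * I) =
      K t / (Real.cosh (π * t) : ℂ) - K (-(I / 2)) * ((Real.cosh (π * t))⁻¹ : ℝ) := by
    rw [ofReal_zero, zero_mul, add_zero,
      coshQuotient_of_ne fun h ↦ by simpa using congr_arg im h, sub_div]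
    push_cast
    ring
  have bot_eq (t : ℝ) : coshQuotient K (t + (-1 : ℝ) * I) =
      K (-(I / 2)) * ((Real.cosh (π * t))⁻¹ : ℝ) - K (t - I) / (Real.cosh (π * t) : ℂ) := by
    rw [ofReal_neg, ofReal_one, neg_one_mul, ← sub_eq_add_neg,
      coshQuotient_of_ne fun h ↦ by simpa using congr_arg im h, cosh_pi_mul_sub_I]
    push_cast
    ring
  have lines_eq := integral_horizontal_line_eq (by norm_num) (diffContOnCl_coshQuotient hK)
    (tendsto_coshQuotient hφ hb)
    ((int_const.sub int_bot).congr (.of_forall fun t ↦ (bot_eq t).symm))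
    ((int_top.sub int_const).congr (.of_forall fun t ↦ (top_eq t).symm))
  simp only [bot_eq, top_eq, integral_sub int_const int_bot, integral_sub int_top int_const,
    integral_const_mul, integral_complex_ofReal, integral_inv_cosh_pi_mul, ofReal_one,
    mul_one] at lines_eq
  linear_combination -lines_eq

end ResidueFormula

section LineIntegral

/-- The integral `∫ g(t) J_{σ + 2it}(x) / cosh(πt) dt` of Bessel functions over the vertical line
`Re ν = σ` of orders. -/
noncomputable def besselLineIntegral (g : ℝ → ℂ) (σ x : ℝ) : ℂ :=
  ∫ t : ℝ, g t * (besselJ (σ + 2 * I * t) x / (Real.cosh (π * t) : ℂ))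

variable {g : ℝ → ℂ} {σ x : ℝ}

lemma besselLineIntegral_const_mul (c : ℂ) (g : ℝ → ℂ) (σ x : ℝ) :
    besselLineIntegral (fun t ↦ c * g t) σ x = c * besselLineIntegral g σ x := by
  simp only [besselLineIntegral, mul_assoc, integral_const_mul]

lemma continuous_besselJ_line_div_cosh (hσ : 0 ≤ σ) (hx : 0 < x) :
    Continuous fun t : ℝ ↦ besselJ (σ + 2 * I * t) x / (Real.cosh (π * t) : ℂ) := by
  refine Continuous.div (continuous_iff_continuousAt.2 fun t ↦ ?_) (by fun_prop)
    fun t ↦ ofReal_ne_zero.2 (Real.cosh_pos _).ne'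
  have diff : DifferentiableAt ℂ (fun μ ↦ besselJ μ x) (σ + 2 * I * t) :=
    differentiableAt_besselJ_index (by simpa using by linarith) hx
  exact ContinuousAt.comp (f := fun t : ℝ ↦ (σ + 2 * I * t : ℂ)) diff.continuousAt (by fun_prop)

lemma exists_norm_besselJ_line_div_cosh_le (hσ : 0 ≤ σ) (R : ℝ) :
    ∃ M : ℝ, ∀ x ∈ Set.Ioc 0 R, ∀ t : ℝ,
      ‖besselJ (σ + 2 * I * t) x / (Real.cosh (π * t) : ℂ)‖ ≤ M := by
  obtain ⟨M, hM⟩ := exists_norm_besselJ_le σ R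
  refine ⟨M, fun x hx t ↦ ?_⟩
  have arg_eq : π * (σ + 2 * I * t : ℂ).im / 2 = π * t := by simp; ring
  have bound := hM (σ + 2 * I * t) x (by simpa) (by simp) hx.1 hx.2
  rw [arg_eq] at bound
  rwa [norm_div, norm_real, Real.norm_of_nonneg (Real.cosh_pos _).le,
    div_le_iff₀ (Real.cosh_pos _)]

lemma hasDerivAt_besselJ_line_div_cosh {t : ℝ} (hσ : 0 ≤ σ) (hx : 0 < x) :
    HasDerivAt (fun y ↦ besselJ (σ + 2 * I * t) y / (Real.cosh (π * t) : ℂ))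
      ((besselJ ((σ - 1 : ℝ) + 2 * I * t) x / (Real.cosh (π * t) : ℂ) -
        besselJ ((σ + 1 : ℝ) + 2 * I * t) x / (Real.cosh (π * t) : ℂ)) / 2) x := by
  have := hasDerivAt_besselJ (ν := σ + 2 * I * t) (by simpa) hx
  refine (this.div_const (Real.cosh (π * t) : ℂ)).congr_deriv ?_
  push_cast
  ring_nf

lemma integrable_mul_besselJ_line (hg : Integrable g) (hσ : 0 ≤ σ) (hx : 0 < x) :
    Integrable fun t : ℝ ↦ g t * (besselJ (σ + 2 * I * t) x / (Real.cosh (π * t) : ℂ)) := by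
  obtain ⟨M, hM⟩ := exists_norm_besselJ_line_div_cosh_le hσ x
  exact hg.mul_bdd (continuous_besselJ_line_div_cosh hσ hx).aestronglyMeasurable
    (.of_forall (hM x ⟨hx, le_rfl⟩))

lemma exists_norm_besselLineIntegral_le (hg : Integrable g) (hσ : 0 ≤ σ) (R : ℝ) :
    ∃ C : ℝ, ∀ x ∈ Set.Ioc 0 R, ‖besselLineIntegral g σ x‖ ≤ C := by
  obtain ⟨M, hM⟩ := exists_norm_besselJ_line_div_cosh_le hσ R
  refine ⟨∫ t, ‖g t‖ * M, fun x hx ↦ norm_integral_le_of_norm_le (hg.norm.mul_const M)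
    (.of_forall fun t ↦ ?_)⟩
  rw [norm_mul]
  gcongr
  exact hM x hx t

lemma hasDerivAt_besselLineIntegral (hg : Integrable g) (hσ : 1 ≤ σ) (hx : 0 < x) :
    HasDerivAt (besselLineIntegral g σ)
      ((besselLineIntegral g (σ - 1) x - besselLineIntegral g (σ + 1) x) / 2) x := by
  set J : ℝ → ℝ → ℝ → ℂ := fun σ y t ↦ besselJ (σ + 2 * I * t) y / (Real.cosh (π * t) : ℂ)
  have hσ_sub : 0 ≤ σ - 1 := sub_nonneg.2 hσ
  have hσ_add : 0 ≤ σ + 1 := by linarith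
  obtain ⟨M₁, hM₁⟩ := exists_norm_besselJ_line_div_cosh_le hσ_sub (2 * x)
  obtain ⟨M₂, hM₂⟩ := exists_norm_besselJ_line_div_cosh_le hσ_add (2 * x)
  have int_prev := integrable_mul_besselJ_line hg hσ_sub hx
  have int_next := integrable_mul_besselJ_line hg hσ_add hx
  have deriv_bound (t y : ℝ) (hy : y ∈ Set.Ioo 0 (2 * x)) :
      ‖g t * ((J (σ - 1) y t - J (σ + 1) y t) / 2)‖ ≤ ‖g t‖ * ((M₁ + M₂) / 2) := by
    rw [norm_mul, norm_div, Complex.norm_two]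
    gcongr
    exact (norm_sub_le _ _).trans
      (add_le_add (hM₁ y (Set.Ioo_subset_Ioc_self hy) t) (hM₂ y (Set.Ioo_subset_Ioc_self hy) t))
  have deriv_integral := (hasDerivAt_integral_of_dominated_loc_of_deriv_le
    (Ioo_mem_nhds hx (by linarith))
    (mem_of_superset (lt_mem_nhds hx) fun y hy ↦
      (integrable_mul_besselJ_line hg (by linarith) hy).aestronglyMeasurable)
    (integrable_mul_besselJ_line hg (by linarith) hx)
    (hg.aestronglyMeasurable.mul (((continuous_besselJ_line_div_cosh hσ_sub hx).sub
      (continuous_besselJ_line_div_cosh hσ_add hx)).div_const 2).aestronglyMeasurable)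
    (.of_forall deriv_bound) (hg.norm.mul_const _) (.of_forall fun t y hy ↦
      (hasDerivAt_besselJ_line_div_cosh (by linarith) hy.1).const_mul (g t))).2
  refine deriv_integral.congr_deriv ?_
  rw [besselLineIntegral, besselLineIntegral, ← integral_sub int_prev int_next,
    ← integral_div]
  congr 1
  ext t
  ring

end LineIntegral

section Superposition

/-- The superposition `c J_{k-1}(x) + ∫ g(t) J_{k + 2it}(x) / cosh(πt) dt` of Bessel functions:
the shape of `H⁺` for `k = 2`, and of its derivatives for neighbouring `k`. -/
noncomputable def besselSuperposition (c : ℂ) (g : ℝ → ℂ) (k : ℕ) (x : ℝ) : ℂ :=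
  c * besselJ (k - 1) x + besselLineIntegral g k x

variable {g : ℝ → ℂ} {x : ℝ}

lemma hasDerivAt_besselSuperposition (c : ℂ) (hg : Integrable g) (k : ℕ) (hx : 0 < x) :
    HasDerivAt (besselSuperposition c g (k + 1))
      ((besselSuperposition c g k x - besselSuperposition c g (k + 2) x) / 2) x := by
  have deriv_J : HasDerivAt (besselJ k) ((besselJ (k - 1) x - besselJ (k + 1) x) / 2) x :=
    hasDerivAt_besselJ (by simp) hx
  have deriv_line := hasDerivAt_besselLineIntegral (σ := k + 1) hg (by simp) hx
  have cast_pred : ((k + 1 : ℕ) : ℂ) - 1 = k := by push_cast; ring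
  have cast_succ : ((k + 2 : ℕ) : ℂ) - 1 = k + 1 := by push_cast; ring
  have cast_add_two : ((k + 2 : ℕ) : ℝ) = (k + 1) + 1 := by push_cast; ring
  unfold besselSuperposition
  rw [cast_pred, cast_succ, cast_add_two, Nat.cast_succ (R := ℝ)]
  rw [add_sub_cancel_right] at deriv_line
  exact ((deriv_J.const_mul c).add deriv_line).congr_deriv (by ring)

lemma exists_norm_besselJ_natCast_sub_one_le (k : ℕ) (R : ℝ) :
    ∃ M : ℝ, ∀ x ∈ Set.Ioc 0 R, ‖besselJ (k - 1) x‖ ≤ M := by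
  have bound_nat (n : ℕ) : ∃ M : ℝ, ∀ x ∈ Set.Ioc 0 R, ‖besselJ n x‖ ≤ M := by
    obtain ⟨M, hM⟩ := exists_norm_besselJ_le n R
    exact ⟨M, fun x hx ↦ by simpa using hM n x (by simp) (by simp) hx.1 hx.2⟩
  cases k with
  | zero =>
    obtain ⟨M, hM⟩ := bound_nat 1
    refine ⟨M, fun x hx ↦ ?_⟩
    simpa [besselJ_neg_one hx.1] using hM x hx
  | succ n => simpa using bound_nat n

lemma exists_norm_besselSuperposition_le (c : ℂ) (hg : Integrable g) (k : ℕ) (R : ℝ) :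
    ∃ C : ℝ, ∀ x ∈ Set.Ioc 0 R, ‖besselSuperposition c g k x‖ ≤ C := by
  obtain ⟨M, hM⟩ := exists_norm_besselJ_natCast_sub_one_le k R
  obtain ⟨C, hC⟩ := exists_norm_besselLineIntegral_le hg k.cast_nonneg R
  refine ⟨‖c‖ * M + C, fun x hx ↦ (norm_add_le _ _).trans ?_⟩
  rw [norm_mul]
  gcongr
  exacts [hM x hx, hC x hx]

end Superposition

section ContourShift

variable {H : ℂ → ℂ} {φ : ℝ → ℝ}

lemma integrable_mul_id_sub_I (hH : DiffContOnCl ℂ H (im ⁻¹' Set.Ioo (-1) 0))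
    (hφi : Integrable φ) (hb : ∀ s : ℂ, s.im ∈ Set.Icc (-1) 0 → ‖H s * s‖ ≤ φ s.re) :
    Integrable fun t : ℝ ↦ H (t - I) * (t - I) := by
  have cont : Continuous fun t : ℝ ↦ H (t - I) :=
    (continuousOn_closed_strip (by norm_num) hH).comp_continuous (by fun_prop) (by simp)
  refine hφi.mono' (cont.mul (by fun_prop)).aestronglyMeasurable (.of_forall fun t ↦ ?_)
  simpa using hb (t - I) (by simp)

lemma diffContOnCl_besselJ_two_mul_I_mul {x : ℝ} (hx : 0 < x) :
    DiffContOnCl ℂ (fun s ↦ besselJ (2 * I * s) x) (im ⁻¹' Set.Ioo (-1) 0) := by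
  refine DifferentiableOn.diffContOnCl fun s hs ↦ ?_
  rw [closure_preimage_im, closure_Ioo (by norm_num)] at hs
  have diff : DifferentiableAt ℂ (fun μ ↦ besselJ μ x) (2 * I * s) :=
    differentiableAt_besselJ_index (by simpa using by linarith [hs.2]) hx
  have diff_arg : DifferentiableAt ℂ (fun s ↦ 2 * I * s) s := by fun_prop
  exact (diff.comp s diff_arg).differentiableWithinAt

lemma exists_norm_besselJ_two_mul_I_mul_le {x : ℝ} (hx : 0 < x) :
    ∃ M : ℝ, ∀ s : ℂ, s.im ∈ Set.Icc (-1) 0 →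
      ‖besselJ (2 * I * s) x‖ ≤ M * Real.cosh (π * s.re) := by
  obtain ⟨M, hM⟩ := exists_norm_besselJ_le 2 x
  refine ⟨M, fun s hs ↦ ?_⟩
  have arg_eq : π * (2 * I * s).im / 2 = π * s.re := by simp; ring
  rw [← arg_eq]
  exact hM (2 * I * s) x (by simpa using by linarith [hs.2]) (by simpa using by linarith [hs.1])
    hx le_rfl

lemma integral_mul_besselJ_sub_I_div_cosh (g : ℝ → ℂ) (x : ℝ) :
    ∫ t : ℝ, g t * besselJ (2 * I * (t - I)) x / (Real.cosh (π * t) : ℂ) =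
      besselLineIntegral g 2 x := by
  rw [besselLineIntegral]
  congr 1
  ext t
  have order_eq : 2 * I * (t - I) = (2 : ℝ) + 2 * I * t := by
    push_cast
    linear_combination -2 * I_sq
  rw [order_eq, mul_div_assoc]

lemma Hplus_eq_besselSuperposition {h : ℝ → ℝ} (hext : ∀ t : ℝ, H t = h t)
    (hH : DiffContOnCl ℂ H (im ⁻¹' Set.Ioo (-1) 0)) (hφ : Tendsto φ (cocompact ℝ) (𝓝 0))
    (hφi : Integrable φ) (hb : ∀ s : ℂ, s.im ∈ Set.Icc (-1) 0 → ‖H s * s‖ ≤ φ s.re)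
    {x : ℝ} (hx : 0 < x) :
    Hplus h x = besselSuperposition (2 / π * H (-(I / 2)))
      (fun t ↦ -(2 * I / π) * (H (t - I) * (t - I))) 2 x := by
  obtain ⟨M, hM⟩ := exists_norm_besselJ_two_mul_I_mul_le hx
  set K : ℂ → ℂ := fun s ↦ H s * s * besselJ (2 * I * s) x with hK
  have diff_K : DiffContOnCl ℂ K (im ⁻¹' Set.Ioo (-1) 0) :=
    (hH.smul differentiable_id.diffContOnCl).smul (diffContOnCl_besselJ_two_mul_I_mul hx)
  have bound_K (s : ℂ) (hs : s.im ∈ Set.Icc (-1) 0) :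
      ‖K s‖ ≤ φ s.re * M * Real.cosh (π * s.re) := calc
    ‖K s‖ = ‖H s * s‖ * ‖besselJ (2 * I * s) x‖ := norm_mul _ _
    _ ≤ φ s.re * (M * Real.cosh (π * s.re)) :=
      mul_le_mul (hb s hs) (hM s hs) (norm_nonneg _) ((norm_nonneg _).trans (hb s hs))
    _ = φ s.re * M * Real.cosh (π * s.re) := (mul_assoc _ _ _).symm
  have shift := integral_div_cosh_add_integral_sub_I diff_K (by simpa using hφ.mul_const M)
    (hφi.mul_const M) bound_K
  have Hplus_eq : Hplus h x = 2 * I / π * ∫ t : ℝ, K t / (Real.cosh (π * t) : ℂ) := by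
    rw [Hplus]
    congr 2
    ext t
    rw [hK, ← hext]
    ring
  have residue_eq : K (-(I / 2)) = -(I / 2) * H (-(I / 2)) * besselJ ((2 : ℕ) - 1) x := by
    have order_eq : 2 * I * -(I / 2) = (2 : ℕ) - 1 := by
      push_cast
      linear_combination -I_sq
    rw [hK, ← order_eq]
    ring
  rw [besselSuperposition, besselLineIntegral_const_mul, Nat.cast_ofNat (R := ℝ),
    ← integral_mul_besselJ_sub_I_div_cosh, Hplus_eq, eq_sub_of_add_eq shift, residue_eq]
  linear_combination (-2 / π * H (-(I / 2)) * besselJ ((2 : ℕ) - 1) x) * I_sq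

end ContourShift

section Decay

variable {r : ℝ}

lemma tendsto_one_add_abs_rpow_neg (hr : 0 < r) :
    Tendsto (fun t : ℝ ↦ (1 + |t|) ^ (-r)) (cocompact ℝ) (𝓝 0) :=
  (tendsto_rpow_neg_atTop hr).comp (tendsto_atTop_add_const_left _ _ tendsto_norm_cocompact_atTop)

lemma norm_mul_le_of_norm_le_rpow {w s : ℂ} {C : ℝ} (hr : 0 ≤ r)
    (hw : ‖w‖ ≤ C * (1 + ‖s‖) ^ (-(r + 1))) :
    ‖w * s‖ ≤ C * (1 + |s.re|) ^ (-r) := by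
  have base_pos : 0 < 1 + ‖s‖ := by positivity
  have rpow_succ : (1 + ‖s‖) ^ (-(r + 1)) * (1 + ‖s‖) = (1 + ‖s‖) ^ (-r) := by
    rw [← Real.rpow_add_one base_pos.ne', neg_add_rev, neg_add_cancel_comm]
  have C_nonneg : 0 ≤ C :=
    nonneg_of_mul_nonneg_left ((norm_nonneg w).trans hw) (Real.rpow_pos_of_pos base_pos _)
  calc ‖w * s‖ = ‖w‖ * ‖s‖ := norm_mul w s
    _ ≤ C * (1 + ‖s‖) ^ (-(r + 1)) * (1 + ‖s‖) := by gcongr; linarith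
    _ = C * (1 + ‖s‖) ^ (-r) := by rw [mul_assoc, rpow_succ]
    _ ≤ C * (1 + |s.re|) ^ (-r) := by
      gcongr ?_ * ?_
      exact Real.rpow_le_rpow_of_nonpos (by positivity)
        (by linarith [abs_re_le_norm s]) (by linarith)

end Decay

lemma exists_eqOn_besselSuperposition {δ : ℝ} (hδ : 0 < δ) {h : ℝ → ℝ} {H : ℂ → ℂ}
    (hext : ∀ t : ℝ, H t = h t) (hH : DiffContOnCl ℂ H (im ⁻¹' Set.Ioo (-1) 0))
    (hbound : ∃ C : ℝ, ∀ s : ℂ, s.im ∈ Set.Icc (-1) 0 → ‖H s‖ ≤ C * (1 + ‖s‖) ^ (-(2 + δ))) :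
    ∃ (c : ℂ) (g : ℝ → ℂ), Integrable g ∧
      Set.EqOn (Hplus h) (besselSuperposition c g 2) (Set.Ioi 0) := by
  obtain ⟨C, hC⟩ := hbound
  set φ : ℝ → ℝ := fun t ↦ C * (1 + |t|) ^ (-(1 + δ))
  have hφ : Tendsto φ (cocompact ℝ) (𝓝 0) := by
    simpa [φ] using (tendsto_one_add_abs_rpow_neg (by linarith : 0 < 1 + δ)).const_mul C
  have hφi : Integrable φ :=
    (integrable_one_add_norm (E := ℝ) (μ := volume) (r := 1 + δ) (by simpa)).const_mul C
  have exponent_eq : 2 + δ = 1 + δ + 1 := by ring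
  have hb (s : ℂ) (hs : s.im ∈ Set.Icc (-1) 0) : ‖H s * s‖ ≤ φ s.re :=
    norm_mul_le_of_norm_le_rpow (by linarith) (exponent_eq ▸ hC s hs)
  exact ⟨_, _, (integrable_mul_id_sub_I hH hφi hb).const_mul _,
    fun x hx ↦ Hplus_eq_besselSuperposition hext hH hφ hφi hb hx⟩

theorem Hplus_derivatives_bounded_general {δ : ℝ} (hδ : 0 < δ) {h : ℝ → ℝ} {H : ℂ → ℂ}
    (hext : ∀ t : ℝ, H t = h t) (hH : DiffContOnCl ℂ H (im ⁻¹' Set.Ioo (-1) 0))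
    (hbound : ∃ C : ℝ, ∀ s : ℂ, s.im ∈ Set.Icc (-1) 0 → ‖H s‖ ≤ C * (1 + ‖s‖) ^ (-(2 + δ)))
    (R : ℝ) :
    ∃ C : ℝ, ∀ x ∈ Set.Ioo 0 R,
      DifferentiableAt ℝ (Hplus h) x ∧ DifferentiableAt ℝ (deriv (Hplus h)) x ∧
      ‖deriv (Hplus h) x‖ ≤ C ∧ ‖deriv (deriv (Hplus h)) x‖ ≤ C := by
  obtain ⟨c, g, hg, Hplus_eq⟩ := exists_eqOn_besselSuperposition hδ hext hH hbound
  set S := besselSuperposition c g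
  have hS (k : ℕ) {x : ℝ} (hx : 0 < x) : HasDerivAt (S (k + 1)) ((S k x - S (k + 2) x) / 2) x :=
    hasDerivAt_besselSuperposition c hg k hx
  have deriv_one {x : ℝ} (hx : 0 < x) : HasDerivAt (Hplus h) ((S 1 x - S 3 x) / 2) x :=
    (hS 1 hx).congr_of_eventuallyEq (Hplus_eq.eventuallyEq_of_mem (Ioi_mem_nhds hx))
  have deriv_two {x : ℝ} (hx : 0 < x) : HasDerivAt (deriv (Hplus h))
      (((S 0 x - S 2 x) / 2 - (S 2 x - S 4 x) / 2) / 2) x :=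
    (((hS 0 hx).sub (hS 2 hx)).div_const 2).congr_of_eventuallyEq
      (mem_of_superset (Ioi_mem_nhds hx) fun y hy ↦ (deriv_one hy).deriv)
  choose B hB using fun k ↦ exists_norm_besselSuperposition_le c hg k R
  refine ⟨max ((B 1 + B 3) / 2) (((B 0 + B 2) / 2 + (B 2 + B 4) / 2) / 2), fun x hx ↦ ?_⟩
  have bound (k l : ℕ) : ‖(S k x - S l x) / 2‖ ≤ (B k + B l) / 2 := by
    rw [norm_div, Complex.norm_two]
    have hx' := Set.Ioo_subset_Ioc_self hx
    gcongr
    exact norm_sub_le_of_le (hB k x hx') (hB l x hx')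
  refine ⟨(deriv_one hx.1).differentiableAt, (deriv_two hx.1).differentiableAt, ?_, ?_⟩
  · rw [(deriv_one hx.1).deriv]
    exact (bound 1 3).trans (le_max_left _ _)
  · rw [(deriv_two hx.1).deriv, norm_div, Complex.norm_two]
    refine le_trans ?_ (le_max_right _ _)
    gcongr
    exact norm_sub_le_of_le (bound 0 2) (bound 2 4)

/-- For `h ∈ 𝓗(A,δ)` with `A > 13`, the function `H⁺` is twice differentiable on `(0, 4π)` and
its first two derivatives are bounded there. -/
theorem Hplus_derivatives_bounded (A δ : ℝ) (hA : 13 < A) (hδ : 0 < δ) (h : ℝ → ℝ) (H : ℂ → ℂ)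
    (hh : IsInHClass A δ h H) :
    ∃ C : ℝ, ∀ x ∈ Set.Ioo (0 : ℝ) (4 * π),
      DifferentiableAt ℝ (Hplus h) x ∧ DifferentiableAt ℝ (deriv (Hplus h)) x ∧
      ‖deriv (Hplus h) x‖ ≤ C ∧ ‖deriv (deriv (Hplus h)) x‖ ≤ C := by
  have mem_strip (s : ℂ) (hs : s.im ∈ Set.Icc (-1) 0) : |s.im| ≤ A :=
    abs_le.2 ⟨by linarith [hs.1], by linarith [hs.2]⟩
  have closure_strip : closure (im ⁻¹' Set.Ioo (-1) 0) = im ⁻¹' Set.Icc (-1) 0 := by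
    rw [closure_preimage_im, closure_Ioo (by norm_num)]
  exact Hplus_derivatives_bounded_general hδ hh.extends_h
    (hh.holo.mono (closure_strip ▸ mem_strip)).diffContOnCl
    (hh.bound.imp fun _ hC s hs ↦ hC s (mem_strip s hs)) (4 * π)
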